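/- arXiv:0807.3056 — 5 statements merged into one kernel-verified Lean document; each statement's English description precedes it below -/
import Mathlib

section
/- With the fermionic Fock space V built from a complex vector space 𝒞 with symmetric bilinear form ⟨·,·⟩, the creation and annihilation operators satisfy the Clifford (canonical anticommutation) relations: for all u, v ∈ 𝒞 and all m, n ∈ ℤ + 1/2, u(m)v(n) + v(n)u(m) = ⟨u,v⟩ δ_{m,−n} · id_V. In particular the fields u(z) = Σ_{m ∈ ℤ+1/2} u(m) z^{−m−1/2} satisfy {u(z), v(w)} = ⟨u,v⟩ δ(z−w) coefficientwise. -/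
noncomputable section

variable (C : Type*) [AddCommGroup C] [Module ℂ C]

/-- `W = ⊕_{k ∈ ℤ_{≥0}+1/2} 𝒞^{(k)}`: the direct sum of copies of `𝒞`, the
copy indexed by `k : ℕ` standing for the half-integer `k + 1/2`; the element
of the `k`-th copy corresponding to `u : 𝒞` is the generator `u(-(k+1/2))`. -/
abbrev FockW := ℕ →₀ C

/-- The fermionic Fock space `V = Λ(W)`, the exterior algebra of `W`. -/
abbrev FockV := ExteriorAlgebra ℂ (FockW C)

/-- The creation operator `u(-(k+1/2))`: left exterior multiplication by the
generator `u(-(k+1/2))`. -/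
def create (u : C) (k : ℕ) : FockV C →ₗ[ℂ] FockV C :=
  LinearMap.mulLeft ℂ (ExteriorAlgebra.ι ℂ (Finsupp.single k u))

variable (B : C →ₗ[ℂ] C →ₗ[ℂ] ℂ)

/-- The annihilation operator `u(k+1/2)`: the unique odd derivation of `Λ(W)`
(the left contraction/interior product against the dual vector
`w ↦ ⟨u, w_k⟩`) sending the generator `v(-(l+1/2))` to `⟨u,v⟩ δ_{k,l} · 1`. -/
def annih (u : C) (k : ℕ) : FockV C →ₗ[ℂ] FockV C :=
  CliffordAlgebra.contractLeft ((B u).comp (Finsupp.lapply k))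

/-- The mode `u(m/2)` for an odd integer `m` (so that the half-integers
`m/2 ∈ ℤ + 1/2` are parametrized by odd `m : ℤ`): a creation operator if
`m/2 < 0`, an annihilation operator if `m/2 > 0`. -/
def fop (u : C) (m : ℤ) : FockV C →ₗ[ℂ] FockV C :=
  if m < 0 then create C u ((-m - 1) / 2).toNat else annih C B u ((m - 1) / 2).toNat

/-- The normal ordered product `:u(m/2) v(n/2):` for odd integers `m`, `n`:
it is `u(m/2)v(n/2)` if `m/2 < 0` and `−v(n/2)u(m/2)` if `m/2 > 0`. -/
def nord (u : C) (m : ℤ) (v : C) (n : ℤ) : FockV C →ₗ[ℂ] FockV C :=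
  if m < 0 then (fop C B u m).comp (fop C B v n)
  else -((fop C B v n).comp (fop C B u m))

/-- The normal-ordered quadratic operator
`T_{r₁,r₂}(p) = Σ_{k ∈ ℤ+1/2} :r₁(k) r₂(p−k):` applied to `x ∈ V`, the sum
running over the half-integers `k = j/2` with `j : ℤ` odd (on each vector of
`V` all but finitely many summands act as zero). -/
def Tq (r₁ r₂ : C) (p : ℤ) (x : FockV C) : FockV C :=
  ∑ᶠ (j : ℤ) (_ : Odd j), nord C B r₁ j r₂ (2 * p - j) x

end

/-- The creation and annihilation operators on the fermionic Fock space
satisfy the Clifford (canonical anticommutation) relations: for `u, v ∈ 𝒞`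
and half-integers `m/2, n/2 ∈ ℤ + 1/2` (`m`, `n` odd),
`u(m/2)v(n/2) + v(n/2)u(m/2) = ⟨u,v⟩ δ_{m/2,−n/2} · id_V`; coefficientwise
this is the field relation `{u(z), v(w)} = ⟨u,v⟩ δ(z−w)`. -/
theorem clifford_anticommutation_relations
    (C : Type*) [AddCommGroup C] [Module ℂ C]
    (B : C →ₗ[ℂ] C →ₗ[ℂ] ℂ) (hB : ∀ u v : C, B u v = B v u)
    (u v : C) (m n : ℤ) (hm : Odd m) (hn : Odd n) :
    (fop C B u m).comp (fop C B v n) + (fop C B v n).comp (fop C B u m) =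
      if m = -n then (B u v) • (LinearMap.id : FockV C →ₗ[ℂ] FockV C) else 0 := by
  have key : ∀ (a b : C) (k l : ℕ),
      (create C a k).comp (annih C B b l) + (annih C B b l).comp (create C a k) =
        if k = l then (B b a) • (LinearMap.id : FockV C →ₗ[ℂ] FockV C) else 0 := by
    intro a b k l
    refine LinearMap.ext fun x => ?_
    have h := CliffordAlgebra.contractLeft_ι_mul (Q := (0 : QuadraticForm ℂ (FockW C)))
      (d := (B b).comp (Finsupp.lapply l)) (Finsupp.single k a) x
    simp only [LinearMap.add_apply, LinearMap.comp_apply, create, annih, LinearMap.mulLeft_apply,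
      ExteriorAlgebra.ι]
    erw [h]
    split_ifs with hkl
    · subst hkl
      simp
    · simp [Finsupp.single_apply, hkl]
  obtain ⟨i, rfl⟩ := hm
  obtain ⟨j, rfl⟩ := hn
  unfold fop
  split_ifs with h1 h2 h3 h3 h2 h3 h3
  · omega
  · refine LinearMap.ext fun x => ?_
    simp only [LinearMap.add_apply, LinearMap.comp_apply, create, LinearMap.mulLeft_apply,
      ← mul_assoc, ← add_mul]
    rw [ExteriorAlgebra.ι_add_mul_swap]
    simp
  · rw [key, if_pos (by omega), hB]
  · rw [key, if_neg (by omega)]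
  · rw [add_comm, key, if_pos (by omega)]
  · rw [add_comm, key, if_neg (by omega)]
  · omega
  · refine LinearMap.ext fun x => ?_
    simp only [LinearMap.add_apply, LinearMap.comp_apply, annih]
    rw [CliffordAlgebra.contractLeft_comm]
    simp
end

section
/- With the fermionic Fock space V built from a complex vector space 𝒞 with symmetric bilinear form ⟨·,·⟩, the contraction of two fermionic modes is scalar and supported on opposite modes with positive first index: for all u, v ∈ 𝒞 and all m, n ∈ ℤ + 1/2, u(m)v(n) − :u(m)v(n): = ⟨u,v⟩ δ_{m,−n} 𝟙[m > 0] · id_V as operators on V. (This is the componentwise form of the operator product expansion u(z)v(w) = :u(z)v(w): + ⟨u,v⟩/(z−w).) -/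
/-- The contraction of two fermionic modes is scalar and supported on opposite
modes with positive first index: for `u, v ∈ 𝒞` and half-integers
`m/2, n/2 ∈ ℤ + 1/2` (`m`, `n` odd),
`u(m/2)v(n/2) − :u(m/2)v(n/2): = ⟨u,v⟩ δ_{m/2,−n/2} 𝟙[m/2 > 0] · id_V`
(the componentwise form of the OPE `u(z)v(w) = :u(z)v(w): + ⟨u,v⟩/(z−w)`). -/
theorem fermionic_contraction
    (C : Type*) [AddCommGroup C] [Module ℂ C]
    (B : C →ₗ[ℂ] C →ₗ[ℂ] ℂ) (hB : ∀ u v : C, B u v = B v u)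
    (u v : C) (m n : ℤ) (hm : Odd m) (hn : Odd n) :
    (fop C B u m).comp (fop C B v n) - nord C B u m v n =
      if m = -n ∧ 0 < m then (B u v) • (LinearMap.id : FockV C →ₗ[ℂ] FockV C) else 0 := by
  rcases lt_trichotomy m 0 with h | h | h
  · have h2 : ¬ (m = -n ∧ 0 < m) := by omega
    rw [if_neg h2, nord, if_pos h, sub_self]
  · subst h
    exact absurd hm (by decide)
  · have hm0 : ¬ m < 0 := by omega
    rw [nord, if_neg hm0, sub_neg_eq_add]
    by_cases hn0 : n < 0
    · simp only [fop, if_neg hm0, if_pos hn0]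
      apply LinearMap.ext
      intro x
      simp only [LinearMap.add_apply, LinearMap.comp_apply, create, annih,
        LinearMap.mulLeft_apply]
      have key := CliffordAlgebra.contractLeft_ι_mul (Q := (0 : QuadraticForm ℂ (FockW C)))
        (d := (B u).comp (Finsupp.lapply ((m - 1) / 2).toNat))
        (Finsupp.single ((-n - 1) / 2).toNat v) x
      erw [key]
      erw [sub_add_cancel]
      obtain ⟨a, rfl⟩ := hm
      obtain ⟨b, rfl⟩ := hn
      by_cases hmn : 2 * a + 1 = -(2 * b + 1)
      · have e : ((-(2 * b + 1) - 1) / 2).toNat = ((2 * a + 1 - 1) / 2).toNat := by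
          rw [hmn]
        rw [if_pos ⟨hmn, h⟩, e]
        simp
      · have e : ((-(2 * b + 1) - 1) / 2).toNat ≠ ((2 * a + 1 - 1) / 2).toNat := by
          omega
        rw [if_neg (fun hh => hmn hh.1)]
        generalize ((-(2 * b + 1) - 1) / 2).toNat = i at e ⊢
        generalize ((2 * a + 1 - 1) / 2).toNat = j at e ⊢
        simp [Finsupp.single_eq_of_ne e.symm]
    · have h2 : ¬ (m = -n ∧ 0 < m) := by omega
      simp only [fop, if_neg hm0, if_neg hn0, if_neg h2]
      apply LinearMap.ext
      intro x
      simp only [LinearMap.add_apply, LinearMap.comp_apply, annih]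
      erw [CliffordAlgebra.contractLeft_comm]
      exact neg_add_cancel _
end

section
/- With the fermionic Fock space V built from a complex vector space 𝒞 with symmetric bilinear form ⟨·,·⟩, the normal-ordered square of any fermionic field vanishes: for every u ∈ 𝒞 and every p ∈ ℤ, the operator T_{u,u}(p) = Σ_{k ∈ ℤ+1/2} :u(k)u(p−k): is the zero operator on V (componentwise form of :u(z)u(z): = 0). -/
theorem annih_eventually_zero (C : Type*) [AddCommGroup C] [Module ℂ C]
    (B : C →ₗ[ℂ] C →ₗ[ℂ] ℂ) (u : C) (x : FockV C) :
    ∃ N : ℕ, ∀ k, N ≤ k → annih C B u k x = 0 := by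
  unfold annih
  induction x using CliffordAlgebra.left_induction with
  | algebraMap r => exact ⟨0, fun k _ => CliffordAlgebra.contractLeft_algebraMap _ _ _⟩
  | add x y hx hy =>
    obtain ⟨N, hN⟩ := hx
    obtain ⟨M, hM⟩ := hy
    refine ⟨max N M, fun k hk => ?_⟩
    rw [map_add, hN k (le_trans (le_max_left _ _) hk), hM k (le_trans (le_max_right _ _) hk),
      add_zero]
  | ι_mul x m hx =>
    obtain ⟨N, hN⟩ := hx
    refine ⟨max N (m.support.sup id + 1), fun k hk => ?_⟩
    have hm : m k = 0 := by
      by_contra h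
      have h1 : id k ≤ m.support.sup id := Finset.le_sup (Finsupp.mem_support_iff.mpr h)
      have h2 := le_trans (le_max_right _ _) hk
      simp only [id] at h1
      omega
    rw [CliffordAlgebra.contractLeft_ι_mul, hN k (le_trans (le_max_left _ _) hk)]
    simp [hm]

theorem fop_anticomm_neg (C : Type*) [AddCommGroup C] [Module ℂ C]
    (B : C →ₗ[ℂ] C →ₗ[ℂ] ℂ) (u : C) (m n : ℤ) (hm : m < 0) (hn : n < 0) (x : FockV C) :
    fop C B u m (fop C B u n x) = - fop C B u n (fop C B u m x) := by
  simp only [fop, hm, hn, if_true, create, LinearMap.mulLeft_apply]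
  rw [← mul_assoc, ← mul_assoc, ← neg_mul]
  congr 1
  exact eq_neg_of_add_eq_zero_left (ExteriorAlgebra.ι_add_mul_swap _ _)

theorem fop_anticomm_nonneg (C : Type*) [AddCommGroup C] [Module ℂ C]
    (B : C →ₗ[ℂ] C →ₗ[ℂ] ℂ) (u : C) (m n : ℤ) (hm : ¬ m < 0) (hn : ¬ n < 0) (x : FockV C) :
    fop C B u m (fop C B u n x) = - fop C B u n (fop C B u m x) := by
  simp only [fop, hm, hn, if_false, annih]
  exact CliffordAlgebra.contractLeft_comm _ _ _

theorem nord_swap (C : Type*) [AddCommGroup C] [Module ℂ C]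
    (B : C →ₗ[ℂ] C →ₗ[ℂ] ℂ) (u : C) (m n : ℤ) (x : FockV C) :
    nord C B u n u m x = - nord C B u m u n x := by
  by_cases hm : m < 0 <;> by_cases hn : n < 0 <;>
    simp only [nord, hm, hn, if_true, if_false, LinearMap.comp_apply, LinearMap.neg_apply, neg_neg]
  · exact fop_anticomm_neg C B u n m hn hm x
  · rw [fop_anticomm_nonneg C B u m n hm hn x, neg_neg]

theorem nord_finite (C : Type*) [AddCommGroup C] [Module ℂ C]
    (B : C →ₗ[ℂ] C →ₗ[ℂ] ℂ) (u : C) (p : ℤ) (x : FockV C) :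
    {j : ℤ | Odd j ∧ nord C B u j u (2 * p - j) x ≠ 0}.Finite := by
  obtain ⟨N, hN⟩ := annih_eventually_zero C B u x
  have key : ∀ m : ℤ, 2 * (N : ℤ) + 1 ≤ m → fop C B u m x = 0 := by
    intro m hm
    rw [fop, if_neg (by omega)]
    exact hN _ (by omega)
  refine (Set.finite_Icc (-(2 * (N : ℤ) + 1) - 2 * |p|) (2 * (N : ℤ) + 1)).subset ?_
  rintro j ⟨-, hj⟩
  have hp := neg_abs_le p
  have hp' := le_abs_self p
  rw [Set.mem_Icc]
  by_contra hcon
  apply hj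
  by_cases h : j < 0
  · rw [nord, if_pos h, LinearMap.comp_apply, key (2 * p - j) (by omega), map_zero]
  · rw [nord, if_neg h, LinearMap.neg_apply, LinearMap.comp_apply, key j (by omega), map_zero,
      neg_zero]

/-- The normal-ordered square of any fermionic field vanishes: for every
`u ∈ 𝒞` and `p ∈ ℤ`, the operator `T_{u,u}(p) = Σ_{k ∈ ℤ+1/2} :u(k)u(p−k):`
is well defined (on each vector only finitely many summands are nonzero) and
is the zero operator on `V` (componentwise form of `:u(z)u(z): = 0`). -/
theorem normal_ordered_square_vanishes
    (C : Type*) [AddCommGroup C] [Module ℂ C]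
    (B : C →ₗ[ℂ] C →ₗ[ℂ] ℂ) (hB : ∀ u v : C, B u v = B v u)
    (u : C) (p : ℤ) (x : FockV C) :
    {j : ℤ | Odd j ∧ nord C B u j u (2 * p - j) x ≠ 0}.Finite ∧
      Tq C B u u p x = 0 := by
  refine ⟨nord_finite C B u p x, ?_⟩
  have h : Tq C B u u p x = - Tq C B u u p x := by
    unfold Tq
    conv_rhs => rw [← finsum_comp_equiv (Equiv.subLeft (2 * p))]
    rw [← finsum_neg_distrib]
    refine finsum_congr fun j => ?_
    rw [← finsum_neg_distrib]
    have ho : Odd (Equiv.subLeft (2 * p) j) ↔ Odd j := by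
      rw [Equiv.subLeft_apply, Int.odd_iff, Int.odd_iff]
      omega
    refine finsum_congr_Prop (propext ho.symm) fun _ => ?_
    rw [Equiv.subLeft_apply, sub_sub_cancel, nord_swap C B u j, neg_neg]
  have h2 : (2 : ℂ) • Tq C B u u p x = 0 := by
    rw [two_smul]
    exact eq_neg_iff_add_eq_zero.mp h
  exact (smul_eq_zero_iff_right (two_ne_zero)).mp h2
end

section
/- (Proposition 3.3, componentwise.) With the fermionic Fock space V built from a complex vector space 𝒞 with symmetric bilinear form ⟨·,·⟩, the normal-ordered quadratic operators satisfy, for all r₁, r₂, s₁, s₂ ∈ 𝒞 and all p, q ∈ ℤ: [T_{r₁,r₂}(p), T_{s₁,s₂}(q)] = ⟨r₁,s₂⟩ T_{r₂,s₁}(p+q) − ⟨r₁,s₁⟩ T_{r₂,s₂}(p+q) + ⟨r₂,s₁⟩ T_{r₁,s₂}(p+q) − ⟨r₂,s₂⟩ T_{r₁,s₁}(p+q) + p·δ_{p+q,0}·(⟨r₁,s₂⟩⟨r₂,s₁⟩ − ⟨r₁,s₁⟩⟨r₂,s₂⟩)·id_V, as operators on V. (This is the coefficient of z^{−p−1}w^{−q−1}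 in the field identity [:r₁(z)r₂(z):, :s₁(w)s₂(w):] = Σ ± ⟨r_i,s_j⟩ :·(z)·(z): δ(z−w) + (⟨r₁,s₂⟩⟨r₂,s₁⟩ − ⟨r₁,s₁⟩⟨r₂,s₂⟩) ∂_w δ(z−w).) -/
namespace FockAux
variable {C : Type*} [AddCommGroup C] [Module ℂ C] (B : C →ₗ[ℂ] C →ₗ[ℂ] ℂ)

lemma create_apply (u : C) (k : ℕ) (x : FockV C) :
    create C u k x = CliffordAlgebra.ι _ (Finsupp.single k u) * x := rfl

lemma annih_create (u v : C) (k l : ℕ) (x : FockV C) :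
    annih C B u k (create C v l x) + create C v l (annih C B u k x)
      = (if k = l then B u v else 0) • x := by
  simp only [create_apply, annih]
  rw [CliffordAlgebra.contractLeft_ι_mul]
  simp only [LinearMap.comp_apply, Finsupp.lapply_apply, Finsupp.single_apply, sub_add_cancel]
  by_cases h : k = l
  · simp [h]
  · simp [h, Ne.symm h]

lemma anti (hB : ∀ u v : C, B u v = B v u) (u v : C) (m n : ℤ) (hm : Odd m) (hn : Odd n)
    (x : FockV C) :
    fop C B u m (fop C B v n x) + fop C B v n (fop C B u m x)
      = (if m + n = 0 then B u v else 0) • x := by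
  obtain ⟨a, rfl⟩ := hm
  obtain ⟨b, rfl⟩ := hn
  unfold fop
  split_ifs with h1 h2 h3 h4 h5 h6 h7
  · omega
  · simp only [create_apply, ← mul_assoc, ← add_mul]
    have := ExteriorAlgebra.ι_add_mul_swap (R := ℂ) (Finsupp.single ((-(2 * a + 1) - 1) / 2).toNat u)
      (Finsupp.single ((-(2 * b + 1) - 1) / 2).toNat v)
    erw [this]
    simp
  · rw [add_comm, annih_create, if_pos (by omega), hB]
  · rw [add_comm, annih_create, if_neg (by omega)]
  · rw [annih_create, if_pos (by omega)]
  · rw [annih_create, if_neg (by omega)]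
  · omega
  · simp only [annih]
    rw [CliffordAlgebra.contractLeft_comm]
    simp

lemma annih_fin (x : FockV C) : ∃ N : ℕ, ∀ u k, N ≤ k → annih C B u k x = 0 := by
  induction x using CliffordAlgebra.left_induction with
  | algebraMap r => exact ⟨0, fun u k _ => by simp [annih]⟩
  | add x y hx hy =>
    obtain ⟨N, hN⟩ := hx
    obtain ⟨M, hM⟩ := hy
    exact ⟨max N M, fun u k hk => by
      rw [map_add, hN u k (by omega), hM u k (by omega), add_zero]⟩
  | ι_mul x w hx =>
    obtain ⟨N, hN⟩ := hx
    refine ⟨max N (w.support.sup id + 1), fun u k hk => ?_⟩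
    have h1 := hN u k (by omega)
    have h2 : w k = 0 := by
      by_contra h
      have := Finset.le_sup (f := id) (Finsupp.mem_support_iff.2 h)
      simp only [id] at this
      omega
    unfold annih at h1 ⊢
    rw [CliffordAlgebra.contractLeft_ι_mul, h1]
    simp [h2]

lemma fop_fin (x : FockV C) : ∃ N : ℤ, 0 ≤ N ∧ ∀ u m, N ≤ m → fop C B u m x = 0 := by
  obtain ⟨N, hN⟩ := annih_fin B x
  refine ⟨2 * N + 1, by omega, fun u m hm => ?_⟩
  rw [fop, if_neg (by omega)]
  exact hN _ _ (by omega)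

lemma nord_anti (hB : ∀ u v : C, B u v = B v u) (u v : C) (m n : ℤ) (hm : Odd m) (hn : Odd n)
    (x : FockV C) : nord C B u m v n x = - nord C B v n u m x := by
  have h := anti B hB u v m n hm hn x
  obtain ⟨a, rfl⟩ := hm
  obtain ⟨b, rfl⟩ := hn
  unfold nord
  split_ifs with h1 h2 h2
  · rw [if_neg (by omega), zero_smul] at h
    simpa using eq_neg_of_add_eq_zero_left h
  · simp
  · simp
  · rw [if_neg (by omega), zero_smul] at h
    simpa using (eq_neg_of_add_eq_zero_left h).symm

/-- the summand, reindexed by all integers -/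
noncomputable def tm (r₁ r₂ : C) (p : ℤ) (x : FockV C) (k : ℤ) : FockV C :=
  nord C B r₁ (2 * k + 1) r₂ (2 * p - (2 * k + 1)) x

lemma tm_fin (r₁ r₂ : C) (p : ℤ) (x : FockV C) : (Function.support (tm B r₁ r₂ p x)).Finite := by
  obtain ⟨N, hN0, hN⟩ := fop_fin B x
  refine (Set.finite_Icc (-(N + 2 * |p| + 1)) (N + 1)).subset fun k hk => ?_
  by_contra hk'
  apply hk
  have hp := neg_abs_le p
  have hp0 := abs_nonneg p
  rw [Set.mem_Icc, not_and_or] at hk'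
  unfold tm nord
  split_ifs with h
  · rw [LinearMap.comp_apply, hN _ _ (by omega), map_zero]
  · rw [LinearMap.neg_apply, LinearMap.comp_apply, hN _ _ (by omega), map_zero, neg_zero]

lemma Tq_eq (r₁ r₂ : C) (p : ℤ) (x : FockV C) : Tq C B r₁ r₂ p x = ∑ᶠ k, tm B r₁ r₂ p x k := by
  unfold Tq
  have : {j : ℤ | Odd j} = Set.range (fun k : ℤ => 2 * k + 1) := by
    ext j; constructor
    · rintro ⟨k, rfl⟩; exact ⟨k, rfl⟩
    · rintro ⟨k, rfl⟩; exact ⟨k, rfl⟩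
  rw [show (∑ᶠ (j : ℤ) (_ : Odd j), nord C B r₁ j r₂ (2 * p - j) x)
    = ∑ᶠ (j : ℤ) (_ : j ∈ {j : ℤ | Odd j}), nord C B r₁ j r₂ (2 * p - j) x from rfl, this,
    finsum_mem_range (fun a b h => by simpa using h)]
  rfl

lemma Tq_swap (hB : ∀ u v : C, B u v = B v u) (r₁ r₂ : C) (p : ℤ) (x : FockV C) :
    Tq C B r₁ r₂ p x = - Tq C B r₂ r₁ p x := by
  rw [Tq_eq, Tq_eq, ← finsum_neg_distrib, ← finsum_comp_equiv (Equiv.subLeft (p - 1))]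
  refine finsum_congr fun k => ?_
  simp only [tm, Equiv.subLeft_apply]
  rw [nord_anti B hB _ _ _ _ (by simp) ⟨k, by ring⟩]
  rw [show 2 * p - (2 * (p - 1 - k) + 1) = 2 * k + 1 by ring,
    show 2 * (p - 1 - k) + 1 = 2 * p - (2 * k + 1) by ring]

/-- `Tq` as a linear map -/
noncomputable def TL (r₁ r₂ : C) (p : ℤ) : FockV C →ₗ[ℂ] FockV C where
  toFun := Tq C B r₁ r₂ p
  map_add' x y := by
    simp only [Tq_eq]
    rw [← finsum_add_distrib (tm_fin B _ _ _ _) (tm_fin B _ _ _ _)]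
    exact finsum_congr fun k => by simp [tm]
  map_smul' c x := by
    simp only [Tq_eq, RingHom.id_apply]
    rw [smul_finsum]
    exact finsum_congr fun k => by simp [tm]

lemma nord_comm (hB : ∀ u v : C, B u v = B v u) (u v s : C) (m n l : ℤ) (hm : Odd m) (hn : Odd n)
    (hl : Odd l) (x : FockV C) :
    nord C B u m v n (fop C B s l x) - fop C B s l (nord C B u m v n x)
      = (if n + l = 0 then B v s else 0) • fop C B u m x
        - (if m + l = 0 then B u s else 0) • fop C B v n x := by
  have e1 := anti B hB v s n l hn hl x
  have e2 := anti B hB u s m l hm hl x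
  have e3 := anti B hB v s n l hn hl (fop C B u m x)
  have e4 := anti B hB u s m l hm hl (fop C B v n x)
  have f1 := congrArg (fop C B u m) e1
  have f2 := congrArg (fop C B v n) e2
  rw [map_add, map_smul] at f1 f2
  unfold nord
  by_cases h : m < 0
  · simp only [if_pos h, LinearMap.comp_apply]
    rw [← f1, ← e4]; abel
  · simp only [if_neg h, LinearMap.comp_apply, LinearMap.neg_apply, map_neg]
    rw [← f2, ← e3]; abel

lemma Tq_fop (hB : ∀ u v : C, B u v = B v u) (r₁ r₂ s : C) (p l : ℤ) (hl : Odd l) (x : FockV C) :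
    TL B r₁ r₂ p (fop C B s l x) - fop C B s l (TL B r₁ r₂ p x)
      = B r₂ s • fop C B r₁ (2 * p + l) x - B r₁ s • fop C B r₂ (2 * p + l) x := by
  change Tq C B r₁ r₂ p (fop C B s l x) - fop C B s l (Tq C B r₁ r₂ p x) = _
  obtain ⟨a, rfl⟩ := hl
  rw [Tq_eq, Tq_eq, map_finsum _ (tm_fin B _ _ _ _), ← finsum_sub_distrib (tm_fin B _ _ _ _)
    ((tm_fin B r₁ r₂ p x).subset fun k hk hk' => hk (by rw [hk', map_zero]))]
  have key : ∀ k : ℤ, tm B r₁ r₂ p (fop C B s (2 * a + 1) x) k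
      - fop C B s (2 * a + 1) (tm B r₁ r₂ p x k)
      = (if k = p + a then B r₂ s • fop C B r₁ (2 * p + (2 * a + 1)) x else 0)
       - (if k = -a - 1 then B r₁ s • fop C B r₂ (2 * p + (2 * a + 1)) x else 0) := by
    intro k
    unfold tm
    rw [nord_comm B hB _ _ _ _ _ _ (by simp) ⟨p - k - 1, by ring⟩ (by simp)]
    congr 1
    · split_ifs with h1 h2 h2
      · subst h2; congr 3; ring
      · omega
      · omega
      · simp
    · split_ifs with h1 h2 h2
      · subst h2; congr 3; ring
      · omega
      · omega
      · simp
  rw [finsum_congr key, finsum_sub_distrib, finsum_eq_single _ (p + a) (fun k hk => if_neg hk),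
    finsum_eq_single _ (-a - 1) (fun k hk => if_neg hk), if_pos rfl, if_pos rfl]
  · exact (Set.finite_singleton (p + a)).subset fun k hk => by
      by_contra h; exact hk (if_neg h)
  · exact (Set.finite_singleton (-a - 1)).subset fun k hk => by
      by_contra h; exact hk (if_neg h)

/-- the central-term weight -/
noncomputable def wt (p k : ℤ) : ℂ := (if k < 0 then 1 else 0) - (if p + k < 0 then 1 else 0)

lemma wt_fin (p : ℤ) : (Function.support (wt p)).Finite := by
  refine (Set.finite_Icc (-|p|) |p|).subset fun k hk => ?_
  by_contra hk'
  apply hk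
  have hp := neg_abs_le p
  have hp' := le_abs_self p
  rw [Set.mem_Icc, not_and_or] at hk'
  unfold wt
  split_ifs <;> first | omega | simp

lemma wt_sum (p : ℤ) : ∑ᶠ k, wt p k = p := by
  have step : ∀ p : ℤ, ∑ᶠ k, wt (p + 1) k = ∑ᶠ k, wt p k + 1 := by
    intro p
    have h : ∑ᶠ k : ℤ, (if k = -p - 1 then (1 : ℂ) else 0) = 1 := by
      rw [finsum_eq_single _ (-p - 1) (fun k hk => if_neg hk), if_pos rfl]
    rw [← h, ← finsum_add_distrib (wt_fin p)]
    · refine finsum_congr fun k => ?_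
      unfold wt
      split_ifs <;> first | omega | simp
    · exact (Set.finite_singleton (-p - 1)).subset fun k hk => by
        by_contra h; exact hk (if_neg h)
  induction p using Int.induction_on with
  | zero => simp [wt]
  | succ i ih => rw [step, ih]; push_cast; ring
  | pred i ih =>
    have := step (-i - 1)
    rw [sub_add_cancel, ih] at this
    push_cast at this ⊢
    linear_combination -this

/-- the summand with shifted modes but unshifted ordering -/
noncomputable def sh (r s : C) (p q : ℤ) (x : FockV C) (k : ℤ) : FockV C :=
  if 2 * k + 1 < 0 then fop C B r (2 * p + (2 * k + 1)) (fop C B s (2 * q - (2 * k + 1)) x)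
  else - fop C B s (2 * q - (2 * k + 1)) (fop C B r (2 * p + (2 * k + 1)) x)

lemma sh_eq (hB : ∀ u v : C, B u v = B v u) (r s : C) (p q : ℤ) (x : FockV C) (k : ℤ) :
    sh B r s p q x k = tm B r s (p + q) x (p + k)
      + wt p k • (if p + q = 0 then B r s else 0) • x := by
  have h := anti B hB r s (2 * p + (2 * k + 1)) (2 * q - (2 * k + 1)) ⟨p + k, by ring⟩
    ⟨q - k - 1, by ring⟩ x
  simp only [show (2 * p + (2 * k + 1) + (2 * q - (2 * k + 1)) = 0) ↔ (p + q = 0) by omega] at h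
  rw [← h]
  unfold sh tm nord wt
  rw [show 2 * (p + k) + 1 = 2 * p + (2 * k + 1) by ring,
    show 2 * (p + q) - (2 * p + (2 * k + 1)) = 2 * q - (2 * k + 1) by ring]
  split_ifs <;> first | omega | simp

lemma tm_shift_fin (r s : C) (p q : ℤ) (x : FockV C) :
    (Function.support fun k => tm B r s q x (p + k)).Finite :=
  (tm_fin B r s q x).preimage (f := fun k => p + k) (fun a _ b _ h => by simpa using h)

lemma wt_smul_fin (p : ℤ) (y : FockV C) : (Function.support fun k => wt p k • y).Finite :=
  (wt_fin p).subset fun k hk hk' => hk (by simp [hk'])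

lemma sh_fin (hB : ∀ u v : C, B u v = B v u) (r s : C) (p q : ℤ) (x : FockV C) :
    (Function.support (sh B r s p q x)).Finite := by
  rw [funext (sh_eq B hB r s p q x)]
  exact ((tm_shift_fin B r s p (p + q) x).union (wt_smul_fin p _)).subset
    (Function.support_add _ _)

lemma sh_sum (hB : ∀ u v : C, B u v = B v u) (r s : C) (p q : ℤ) (x : FockV C) :
    ∑ᶠ k, sh B r s p q x k = Tq C B r s (p + q) x
      + (p : ℂ) • (if p + q = 0 then B r s else 0) • x := by
  rw [finsum_congr (sh_eq B hB r s p q x),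
    finsum_add_distrib (tm_shift_fin B r s p (p + q) x) (wt_smul_fin p _), Tq_eq,
    ← finsum_comp_equiv (Equiv.addLeft p) (f := tm B r s (p + q) x), ← finsum_smul, wt_sum]
  · rfl

lemma TL_tm (hB : ∀ u v : C, B u v = B v u) (r₁ r₂ s₁ s₂ : C) (p q : ℤ) (x : FockV C) (k : ℤ) :
    TL B r₁ r₂ p (tm B s₁ s₂ q x k) - tm B s₁ s₂ q (TL B r₁ r₂ p x) k =
      (B r₂ s₁ • sh B r₁ s₂ p q x k - B r₁ s₁ • sh B r₂ s₂ p q x k)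
      + (B r₂ s₂ • tm B s₁ r₁ (p + q) x k - B r₁ s₂ • tm B s₁ r₂ (p + q) x k) := by
  have o1 : Odd (2 * k + 1) := by simp
  have o2 : Odd (2 * q - (2 * k + 1)) := ⟨q - k - 1, by ring⟩
  have a1 := Tq_fop B hB r₁ r₂ s₁ p _ o1 (fop C B s₂ (2 * q - (2 * k + 1)) x)
  have a2 := congrArg (fop C B s₁ (2 * k + 1)) (Tq_fop B hB r₁ r₂ s₂ p _ o2 x)
  have b1 := Tq_fop B hB r₁ r₂ s₂ p _ o2 (fop C B s₁ (2 * k + 1) x)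
  have b2 := congrArg (fop C B s₂ (2 * q - (2 * k + 1))) (Tq_fop B hB r₁ r₂ s₁ p _ o1 x)
  unfold sh tm nord
  rw [show 2 * (p + q) - (2 * k + 1) = 2 * p + (2 * q - (2 * k + 1)) by ring]
  simp only [map_sub, map_smul] at a2 b2
  split_ifs with h
  · simp only [LinearMap.comp_apply]
    rw [← a1, ← a2]; abel
  · simp only [LinearMap.comp_apply, LinearMap.neg_apply, map_neg, smul_neg]
    have : ∀ a b c d : FockV C, (-a - -b) + (-c - -d) = -((a - b) + (c - d)) := by
      intros; abel
    rw [this, ← b2, ← b1]; abel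

end FockAux

/-- Proposition 3.3, componentwise: the brackets among the normal-ordered
quadratic operators are
`[T_{r₁,r₂}(p), T_{s₁,s₂}(q)] = ⟨r₁,s₂⟩ T_{r₂,s₁}(p+q) − ⟨r₁,s₁⟩ T_{r₂,s₂}(p+q)`
`+ ⟨r₂,s₁⟩ T_{r₁,s₂}(p+q) − ⟨r₂,s₂⟩ T_{r₁,s₁}(p+q)`
`+ p δ_{p+q,0} (⟨r₁,s₂⟩⟨r₂,s₁⟩ − ⟨r₁,s₁⟩⟨r₂,s₂⟩) · id_V`. -/
theorem bracket_normal_ordered_quadratics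
    (C : Type*) [AddCommGroup C] [Module ℂ C]
    (B : C →ₗ[ℂ] C →ₗ[ℂ] ℂ) (hB : ∀ u v : C, B u v = B v u)
    (r₁ r₂ s₁ s₂ : C) (p q : ℤ) (x : FockV C) :
    Tq C B r₁ r₂ p (Tq C B s₁ s₂ q x) - Tq C B s₁ s₂ q (Tq C B r₁ r₂ p x) =
      B r₁ s₂ • Tq C B r₂ s₁ (p + q) x - B r₁ s₁ • Tq C B r₂ s₂ (p + q) x
        + B r₂ s₁ • Tq C B r₁ s₂ (p + q) x - B r₂ s₂ • Tq C B r₁ s₁ (p + q) x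
        + (if p + q = 0 then (p : ℂ) * (B r₁ s₂ * B r₂ s₁ - B r₁ s₁ * B r₂ s₂) else 0) • x := by

  have smul_fin : ∀ (c : ℂ) (f : ℤ → FockV C), (Function.support f).Finite →
      (Function.support fun k => c • f k).Finite := fun c f hf =>
    hf.subset fun k hk hk' => hk (by simp [hk'])
  have sub_fin : ∀ (f g : ℤ → FockV C), (Function.support f).Finite →
      (Function.support g).Finite → (Function.support fun k => f k - g k).Finite :=
    fun f g hf hg => (hf.union hg).subset (Function.support_sub f g)
  have main : Tq C B r₁ r₂ p (Tq C B s₁ s₂ q x) - Tq C B s₁ s₂ q (Tq C B r₁ r₂ p x)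
      = (B r₂ s₁ • ∑ᶠ k, FockAux.sh B r₁ s₂ p q x k - B r₁ s₁ • ∑ᶠ k, FockAux.sh B r₂ s₂ p q x k)
      + (B r₂ s₂ • Tq C B s₁ r₁ (p + q) x - B r₁ s₂ • Tq C B s₁ r₂ (p + q) x) := by
    have fs := fun r => FockAux.sh_fin B hB r s₂ p q x
    have ft := fun r => FockAux.tm_fin B s₁ r (p + q) x
    rw [FockAux.Tq_eq B s₁ s₂, FockAux.Tq_eq B s₁ s₂, FockAux.Tq_eq B s₁ r₁,
      FockAux.Tq_eq B s₁ r₂]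
    change FockAux.TL B r₁ r₂ p _ - ∑ᶠ k, FockAux.tm B s₁ s₂ q (FockAux.TL B r₁ r₂ p x) k = _
    rw [map_finsum _ (FockAux.tm_fin B _ _ _ _), ← finsum_sub_distrib
      ((FockAux.tm_fin B s₁ s₂ q x).subset fun k hk hk' => hk (by rw [hk', map_zero]))
      (FockAux.tm_fin B _ _ _ _), finsum_congr (FockAux.TL_tm B hB r₁ r₂ s₁ s₂ p q x)]
    rw [finsum_add_distrib (sub_fin _ _ (smul_fin _ _ (fs _)) (smul_fin _ _ (fs _)))
      (sub_fin _ _ (smul_fin _ _ (ft _)) (smul_fin _ _ (ft _))),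
      finsum_sub_distrib (smul_fin _ _ (fs _)) (smul_fin _ _ (fs _)),
      finsum_sub_distrib (smul_fin _ _ (ft _)) (smul_fin _ _ (ft _))]
    simp only [smul_finsum]
  rw [main, FockAux.sh_sum B hB, FockAux.sh_sum B hB, FockAux.Tq_swap B hB s₁ r₁,
    FockAux.Tq_swap B hB s₁ r₂]
  split_ifs <;> module
end

section
/- (Fermionic realization of the symplectic node of type C_n.) Let 𝒞 be the complex vector space with basis {a, ā, a*, ā*} and symmetric bilinear form ⟨·,·⟩ determined by ⟨a, a*⟩ = ⟨a*, a⟩ = 1, ⟨ā, ā*⟩ = ⟨ā*, ā⟩ = 1, and all other pairings of basis vectors equal to 0 (here a, ā play the roles of ε_n, ε_{n̄} and a*, ā* of ε_n*, ε_{n̄}*). On the fermionic Fock space V of 𝒞, define for p ∈ ℤ the operators X₊(p) = T_{a, ā*}(p), X₋(p) = T_{a*, ā}(p), and h(p) = T_{a, a*}(p) − T_{ā, ā*}(p). Then for all k, m ∈ ℤ: (i) [X₊(k), X₋(m)] = −( h(k+m) + k δ_{k+m,0} · id_V ); (ii) [h(k), X₊(m)] = 2 X₊(k+m) and [h(k),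 X₋(m)] = −2 X₋(k+m); (iii) [h(k), h(m)] = 2k δ_{k+m,0} · id_V. Thus X₊, X₋, h realize the MRY relations (R1)–(R3) for the long simple root α_n of the toroidal Lie algebra of type C_n (with (α_n|α_n) = 2) with the central element ¢ acting as the identity, i.e. at level one. -/
noncomputable section

/-- `𝒞`: the complex vector space with basis `{a, ā, a*, ā*}` (coordinates
`0 ↦ a`, `1 ↦ ā`, `2 ↦ a*`, `3 ↦ ā*`). -/
abbrev CC : Type := Fin 4 → ℂ

/-- `a` (playing the role of `ε_n`) -/
def va : CC := ![1, 0, 0, 0]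
/-- `ā` (playing the role of `ε_{n̄}`) -/
def vabar : CC := ![0, 1, 0, 0]
/-- `a*` (playing the role of `ε_n*`) -/
def vastar : CC := ![0, 0, 1, 0]
/-- `ā*` (playing the role of `ε_{n̄}*`) -/
def vabarstar : CC := ![0, 0, 0, 1]

/-- The symmetric bilinear form on `𝒞` with `⟨a,a*⟩ = ⟨a*,a⟩ = 1`,
`⟨ā,ā*⟩ = ⟨ā*,ā⟩ = 1`, and all other pairings of basis vectors zero. -/
def BC : CC →ₗ[ℂ] CC →ₗ[ℂ] ℂ :=
  LinearMap.mk₂ ℂ (fun v w => v 0 * w 2 + v 2 * w 0 + v 1 * w 3 + v 3 * w 1)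
    (fun v v' w => by simp only [Pi.add_apply]; ring)
    (fun c v w => by simp only [Pi.smul_apply, smul_eq_mul]; ring)
    (fun v w w' => by simp only [Pi.add_apply]; ring)
    (fun c v w => by simp only [Pi.smul_apply, smul_eq_mul]; ring)

/-- `X₊(p) = T_{a,ā*}(p)` -/
def Xplus (p : ℤ) (x : FockV CC) : FockV CC := Tq CC BC va vabarstar p x

/-- `X₋(p) = T_{a*,ā}(p)` -/
def Xminus (p : ℤ) (x : FockV CC) : FockV CC := Tq CC BC vastar vabar p x

/-- `h(p) = T_{a,a*}(p) − T_{ā,ā*}(p)` -/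
def hOp (p : ℤ) (x : FockV CC) : FockV CC :=
  Tq CC BC va vastar p x - Tq CC BC vabar vabarstar p x

end

section fermion
variable {C : Type*} [AddCommGroup C] [Module ℂ C] (B : C →ₗ[ℂ] C →ₗ[ℂ] ℂ)

/-- modes indexed by all integers: `fm u i = u(i + 1/2)` -/
noncomputable def fm (u : C) (i : ℤ) : FockV C →ₗ[ℂ] FockV C := fop C B u (2 * i + 1)

lemma fm_neg (u : C) (i : ℤ) (h : i < 0) : fm B u i = create C u (-i-1).toNat := by
  have h1 : 2 * i + 1 < 0 := by omega
  have h2 : (-(2 * i + 1) - 1) / 2 = -i - 1 := by omega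
  rw [fm, fop, if_pos h1, h2]

lemma fm_nonneg (u : C) (i : ℤ) (h : ¬ i < 0) : fm B u i = annih C B u i.toNat := by
  have h1 : ¬ 2 * i + 1 < 0 := by omega
  have h2 : ((2 * i + 1) - 1) / 2 = i := by omega
  rw [fm, fop, if_neg h1, h2]

lemma annih_ι_mul (u : C) (k : ℕ) (w : FockW C) (y : FockV C) :
    annih C B u k (ExteriorAlgebra.ι ℂ w * y)
      = B u (w k) • y - ExteriorAlgebra.ι ℂ w * annih C B u k y := by
  unfold annih
  exact CliffordAlgebra.contractLeft_ι_mul (Q := (0 : QuadraticForm ℂ (FockW C)))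
    (d := (B u).comp (Finsupp.lapply k)) w y

lemma ca (u v : C) (k l : ℕ) (x : FockV C) :
    annih C B u k (create C v l x) + create C v l (annih C B u k x)
      = (if k = l then B u v else 0) • x := by
  simp only [create, LinearMap.mulLeft_apply, annih_ι_mul, Finsupp.single_apply]
  by_cases h : k = l
  · simp [h]
  · simp [h, Ne.symm h]

lemma car (hB : ∀ u v, B u v = B v u) (u v : C) (i j : ℤ) (x : FockV C) :
    fm B u i (fm B v j x) = (if i + j + 1 = 0 then B u v else 0) • x - fm B v j (fm B u i x) := by
  rw [eq_sub_iff_add_eq]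
  by_cases hi : i < 0 <;> by_cases hj : j < 0
  · rw [fm_neg B u i hi, fm_neg B v j hj, if_neg (by omega)]
    simp only [create, LinearMap.mulLeft_apply, ← mul_assoc, ← add_mul, zero_smul]
    rw [ExteriorAlgebra.ι_add_mul_swap, zero_mul]
  · rw [fm_neg B u i hi, fm_nonneg B v j hj, add_comm, ca, hB]
    congr 2
    apply propext; omega
  · rw [fm_nonneg B u i hi, fm_neg B v j hj, ca]
    congr 2
    apply propext; omega
  · rw [fm_nonneg B u i hi, fm_nonneg B v j hj, if_neg (by omega), zero_smul]
    unfold annih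
    rw [CliffordAlgebra.contractLeft_comm]
    simp

lemma fm_bdd (u : C) (x : FockV C) : ∃ N : ℤ, ∀ n ≥ N, fm B u n x = 0 := by
  suffices h : ∃ N : ℕ, ∀ n ≥ N, annih C B u n x = 0 by
    obtain ⟨N, h⟩ := h
    refine ⟨N, fun n hn => ?_⟩
    rw [fm_nonneg B u n (by omega)]
    exact h _ (by omega)
  induction x using CliffordAlgebra.left_induction with
  | algebraMap r => exact ⟨0, fun n _ => CliffordAlgebra.contractLeft_algebraMap _ _ _⟩
  | add x y hx hy =>
    obtain ⟨N, hN⟩ := hx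
    obtain ⟨M, hM⟩ := hy
    refine ⟨max N M, fun n hn => ?_⟩
    rw [map_add, hN n (le_trans (le_max_left _ _) hn), hM n (le_trans (le_max_right _ _) hn),
      add_zero]
  | ι_mul x m hx =>
    obtain ⟨N, hN⟩ := hx
    obtain ⟨M, hM⟩ : ∃ M : ℕ, ∀ n ≥ M, m n = 0 := by
      refine ⟨m.support.sup id + 1, fun n hn => ?_⟩
      by_contra hc
      have := Finset.le_sup (f := id) (Finsupp.mem_support_iff.2 hc)
      simp only [id] at this
      omega
    refine ⟨max N M, fun n hn => ?_⟩
    have := annih_ι_mul B u n m x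
    rw [hN n (le_trans (le_max_left _ _) hn), hM n (le_trans (le_max_right _ _) hn)] at this
    simpa using this

/-- normal ordering with splitting point `c` -/
noncomputable def Nc (c : ℤ) (u v : C) (i j : ℤ) (x : FockV C) : FockV C :=
  if i < c then fm B u i (fm B v j x) else -(fm B v j (fm B u i x))

lemma Nc_fin (c : ℤ) (u v : C) (p : ℤ) (x : FockV C) :
    (Function.support fun i : ℤ => Nc B c u v i (p - i - 1) x).Finite := by
  obtain ⟨N, hN⟩ := fm_bdd B u x
  obtain ⟨M, hM⟩ := fm_bdd B v x
  refine (Set.finite_Icc (min (p - 1 - M) c) (max N c)).subset fun i hi => ?_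
  simp only [Function.mem_support, Nc] at hi
  rw [Set.mem_Icc]
  constructor
  · by_contra hc
    apply hi
    rw [hM _ (by omega), if_pos (by omega), map_zero]
  · by_contra hc
    apply hi
    rw [hN _ (by omega), if_neg (by omega), map_zero, neg_zero]

/-- `f` has finite support and sum `s` -/
def HF {M : Type*} [AddCommGroup M] (f : ℤ → M) (s : M) : Prop :=
  (Function.support f).Finite ∧ ∑ᶠ i, f i = s

section HF
variable {M : Type*} [AddCommGroup M] {f g : ℤ → M} {s t : M}

lemma HF.add (hf : HF f s) (hg : HF g t) : HF (fun i => f i + g i) (s + t) :=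
  ⟨(hf.1.union hg.1).subset (Function.support_add f g),
    by rw [finsum_add_distrib hf.1 hg.1, hf.2, hg.2]⟩

lemma HF.map {M' : Type*} [AddCommGroup M'] (φ : M →+ M') (hf : HF f s) :
    HF (fun i => φ (f i)) (φ s) :=
  ⟨hf.1.subset (Function.support_comp_subset (map_zero φ) f),
    by rw [← hf.2, φ.map_finsum hf.1]⟩

lemma HF.neg (hf : HF f s) : HF (fun i => - f i) (-s) := hf.map (-AddMonoidHom.id M)

lemma HF.sub (hf : HF f s) (hg : HF g t) : HF (fun i => f i - g i) (s - t) := by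
  simpa only [sub_eq_add_neg] using hf.add hg.neg

lemma HF.smul [Module ℂ M] (c : ℂ) (hf : HF f s) : HF (fun i => c • f i) (c • s) :=
  hf.map (DistribSMul.toAddMonoidHom M c)

lemma HF.comp (e : ℤ ≃ ℤ) (hf : HF f s) : HF (fun i => f (e i)) s :=
  ⟨by
    have := hf.1.preimage (e.injective.injOn (s := e ⁻¹' Function.support f))
    exact this, by rw [← hf.2]; exact finsum_comp_equiv e⟩

lemma HF.single (a : ℤ) (s : M) : HF (fun i => if i = a then s else 0) s :=
  ⟨(Set.finite_singleton a).subset fun i hi => by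
      by_contra h
      exact hi (if_neg h),
    by rw [finsum_eq_single _ a (fun i hi => if_neg hi), if_pos rfl]⟩

lemma HF.uniq (hf : HF f s) (hg : HF f t) : s = t := hf.2.symm.trans hg.2

end HF

/-- quadratic operator with splitting point `c` -/
noncomputable def Sq (c : ℤ) (u v : C) (p : ℤ) : FockV C →+ FockV C where
  toFun x := ∑ᶠ i : ℤ, Nc B c u v i (p - i - 1) x
  map_zero' := by simp [Nc]
  map_add' x y := by
    rw [← finsum_add_distrib (Nc_fin B c u v p x) (Nc_fin B c u v p y)]
    congr 1
    funext i
    unfold Nc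
    split_ifs <;> simp only [map_add, neg_add]

lemma Sq_HF (c : ℤ) (u v : C) (p : ℤ) (x : FockV C) :
    HF (fun i : ℤ => Nc B c u v i (p - i - 1) x) (Sq B c u v p x) :=
  ⟨Nc_fin B c u v p x, rfl⟩

lemma Tq_eq (u v : C) (p : ℤ) (x : FockV C) : Tq C B u v p x = Sq B 0 u v p x := by
  have hinj : Function.Injective (fun i : ℤ => 2 * i + 1) := fun a b h => by
    simp only at h; omega
  have hr : {j : ℤ | Odd j} = Set.range (fun i : ℤ => 2 * i + 1) := by
    ext j
    constructor
    · rintro ⟨i, rfl⟩; exact ⟨i, rfl⟩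
    · rintro ⟨i, rfl⟩; exact ⟨i, rfl⟩
  have h1 : Tq C B u v p x = ∑ᶠ j ∈ {j : ℤ | Odd j}, nord C B u j v (2 * p - j) x := rfl
  rw [h1, hr, finsum_mem_range hinj]
  change _ = ∑ᶠ i : ℤ, Nc B 0 u v i (p - i - 1) x
  congr 1
  funext i
  have h2 : 2 * p - (2 * i + 1) = 2 * (p - i - 1) + 1 := by ring
  unfold nord Nc fm
  rw [h2]
  by_cases h : i < 0
  · rw [if_pos (by omega), if_pos h]; rfl
  · rw [if_neg (by omega), if_neg h]; rfl

lemma Sq_succ (hB : ∀ u v, B u v = B v u) (c : ℤ) (u v : C) (p : ℤ) (x : FockV C) :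
    Sq B (c + 1) u v p x = Sq B c u v p x + (if p = 0 then B u v else 0) • x := by
  refine HF.uniq (Sq_HF B (c + 1) u v p x) ?_
  have := (Sq_HF B c u v p x).add (HF.single c ((if p = 0 then B u v else 0) • x))
  convert this using 2 with i
  unfold Nc
  rcases lt_trichotomy i c with h | h | h
  · rw [if_pos (by omega), if_pos h, if_neg (by omega), add_zero]
  · rw [if_pos (by omega), if_neg (by omega), if_pos h, car B hB]
    have : (i + (p - i - 1) + 1 = 0) ↔ p = 0 := by constructor <;> intro h <;> omega
    simp only [this]
    abel
  · rw [if_neg (by omega), if_neg (by omega), if_neg (by omega), add_zero]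

lemma Sq_shift (hB : ∀ u v, B u v = B v u) (c : ℤ) (u v : C) (p : ℤ) (x : FockV C) :
    Sq B c u v p x = Sq B 0 u v p x + ((c : ℂ) * (if p = 0 then B u v else 0)) • x := by
  induction c using Int.induction_on with
  | zero => simp
  | succ n ih =>
    rw [Sq_succ B hB, ih]
    push_cast
    module
  | pred n ih =>
    have := Sq_succ B hB (-(n : ℤ) - 1) u v p x
    rw [sub_add_cancel, ih] at this
    rw [← sub_eq_iff_eq_add] at this
    rw [← this]
    push_cast
    module

lemma Sq_antisymm (hB : ∀ u v, B u v = B v u) (u v : C) (p : ℤ) (x : FockV C) :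
    Sq B 0 v u p x = - Sq B 0 u v p x := by
  refine HF.uniq (Sq_HF B 0 v u p x) ?_
  have := ((Sq_HF B 0 u v p x).comp (Equiv.subLeft (p - 1))).neg
  convert this using 2 with i
  simp only [Equiv.subLeft_apply]
  have e1 : p - (p - 1 - i) - 1 = i := by ring
  have e2 : p - 1 - i = p - i - 1 := by ring
  rw [e1, e2]
  unfold Nc
  by_cases hp : p = 0
  · by_cases h : i < 0
    · rw [if_pos h, if_neg (by omega), neg_neg]
    · rw [if_neg h, if_pos (by omega)]
  · have := car B hB v u i (p - i - 1) x
    rw [if_neg (by omega), zero_smul, zero_sub] at this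
    split_ifs <;> simp [this]

lemma Sq_fm (hB : ∀ u v, B u v = B v u) (r₁ r₂ v : C) (p n : ℤ) (x : FockV C) :
    Sq B 0 r₁ r₂ p (fm B v n x) = fm B v n (Sq B 0 r₁ r₂ p x)
      + B r₂ v • fm B r₁ (p + n) x - B r₁ v • fm B r₂ (p + n) x := by
  refine HF.uniq (Sq_HF B 0 r₁ r₂ p (fm B v n x)) ?_
  have := (((Sq_HF B 0 r₁ r₂ p x).map (fm B v n).toAddMonoidHom).add
    (HF.single (p + n) (B r₂ v • fm B r₁ (p + n) x))).sub
    (HF.single (-n - 1) (B r₁ v • fm B r₂ (p + n) x))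
  convert this using 2 with i
  swap
  · rfl
  have h1 : (if i = p + n then B r₂ v • fm B r₁ (p + n) x else 0)
      = (if p - i - 1 + n + 1 = 0 then B r₂ v else 0) • fm B r₁ i x := by
    by_cases h : i = p + n
    · rw [if_pos h, if_pos (by omega), h]
    · rw [if_neg h, if_neg (by omega), zero_smul]
  have h2 : (if i = -n - 1 then B r₁ v • fm B r₂ (p + n) x else 0)
      = (if i + n + 1 = 0 then B r₁ v else 0) • fm B r₂ (p - i - 1) x := by
    by_cases h : i = -n - 1
    · rw [if_pos h, if_pos (by omega), h]
      congr 3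
      ring
    · rw [if_neg h, if_neg (by omega), zero_smul]
  rw [h1, h2]
  simp only [LinearMap.toAddMonoidHom_coe]
  unfold Nc
  by_cases h : i < 0
  on_goal 1 => simp only [if_pos h]
  on_goal 2 => simp only [if_neg h]
  all_goals
    simp only [car B hB _ v _ n, map_sub, map_smul, map_neg]
    module

lemma Sq_Nc (hB : ∀ u v, B u v = B v u) (r₁ r₂ s₁ s₂ : C) (p j l : ℤ) (x : FockV C) :
    Sq B 0 r₁ r₂ p (Nc B 0 s₁ s₂ j l x) = Nc B 0 s₁ s₂ j l (Sq B 0 r₁ r₂ p x)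
      + B r₂ s₁ • Nc B p r₁ s₂ (p + j) l x - B r₁ s₁ • Nc B p r₂ s₂ (p + j) l x
      + B r₂ s₂ • Nc B 0 s₁ r₁ j (p + l) x - B r₁ s₂ • Nc B 0 s₁ r₂ j (p + l) x := by
  unfold Nc
  have : p + j < p ↔ j < 0 := by constructor <;> intro h <;> omega
  simp only [this]
  split_ifs with h
  all_goals
    simp only [Sq_fm B hB, map_sub, map_add, map_smul, map_neg]
    module

lemma Sq_comm (hB : ∀ u v, B u v = B v u) (r₁ r₂ s₁ s₂ : C) (p q : ℤ) (x : FockV C) :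
    Sq B 0 r₁ r₂ p (Sq B 0 s₁ s₂ q x) = Sq B 0 s₁ s₂ q (Sq B 0 r₁ r₂ p x)
      + B r₂ s₁ • Sq B p r₁ s₂ (p + q) x - B r₁ s₁ • Sq B p r₂ s₂ (p + q) x
      + B r₂ s₂ • Sq B 0 s₁ r₁ (p + q) x - B r₁ s₂ • Sq B 0 s₁ r₂ (p + q) x := by
  refine HF.uniq ((Sq_HF B 0 s₁ s₂ q x).map (Sq B 0 r₁ r₂ p)) ?_
  have := ((((Sq_HF B 0 s₁ s₂ q (Sq B 0 r₁ r₂ p x)).add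
    (((Sq_HF B p r₁ s₂ (p + q) x).comp (Equiv.addLeft p)).smul (B r₂ s₁))).sub
    (((Sq_HF B p r₂ s₂ (p + q) x).comp (Equiv.addLeft p)).smul (B r₁ s₁))).add
    ((Sq_HF B 0 s₁ r₁ (p + q) x).smul (B r₂ s₂))).sub
    ((Sq_HF B 0 s₁ r₂ (p + q) x).smul (B r₁ s₂))
  convert this using 2 with j
  have e1 : p + q - (p + j) - 1 = q - j - 1 := by ring
  have e2 : p + q - j - 1 = p + (q - j - 1) := by ring
  simp only [Equiv.coe_addLeft, e1, e2]
  exact Sq_Nc B hB r₁ r₂ s₁ s₂ p j (q - j - 1) x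

lemma Tq_comm (hB : ∀ u v, B u v = B v u) (r₁ r₂ s₁ s₂ : C) (p q : ℤ) (x : FockV C) :
    Sq B 0 r₁ r₂ p (Sq B 0 s₁ s₂ q x) = Sq B 0 s₁ s₂ q (Sq B 0 r₁ r₂ p x)
      + (B r₂ s₁ • Sq B 0 r₁ s₂ (p + q) x - B r₁ s₁ • Sq B 0 r₂ s₂ (p + q) x
      + B r₂ s₂ • Sq B 0 s₁ r₁ (p + q) x - B r₁ s₂ • Sq B 0 s₁ r₂ (p + q) x
      + ((if p + q = 0 then (p : ℂ) else 0) * (B r₂ s₁ * B r₁ s₂ - B r₁ s₁ * B r₂ s₂)) • x) := by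
  rw [Sq_comm B hB, Sq_shift B hB p r₁, Sq_shift B hB p r₂]
  split_ifs <;> module

end fermion

lemma BC_symm (u v : CC) : BC u v = BC v u := by
  simp only [BC, LinearMap.mk₂_apply]; ring

/-- Fermionic realization of the symplectic node of type `C_n`: the operators
`X₊(p) = T_{a,ā*}(p)`, `X₋(p) = T_{a*,ā}(p)`, `h(p) = T_{a,a*}(p) − T_{ā,ā*}(p)`
satisfy, for all `k, m ∈ ℤ`,
(i) `[X₊(k), X₋(m)] = −(h(k+m) + k δ_{k+m,0} · id_V)`;
(ii) `[h(k), X₊(m)] = 2 X₊(k+m)` and `[h(k), X₋(m)] = −2 X₋(k+m)`;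
(iii) `[h(k), h(m)] = 2k δ_{k+m,0} · id_V`;
i.e. the MRY relations (R1)–(R3) for the long simple root `α_n` of the
toroidal Lie algebra of type `C_n` (with `(α_n|α_n) = 2`), with the central
element `¢` acting as the identity (level one). -/
theorem symplectic_node_realization (k m : ℤ) (x : FockV CC) :
    (Xplus k (Xminus m x) - Xminus m (Xplus k x)
        = -(hOp (k + m) x + (if k + m = 0 then (k : ℂ) else 0) • x)) ∧
    (hOp k (Xplus m x) - Xplus m (hOp k x) = (2 : ℂ) • Xplus (k + m) x) ∧
    (hOp k (Xminus m x) - Xminus m (hOp k x) = -((2 : ℂ) • Xminus (k + m) x)) ∧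
    (hOp k (hOp m x) - hOp m (hOp k x)
        = (if k + m = 0 then 2 * (k : ℂ) else 0) • x) := by
  simp only [Xplus, Xminus, hOp, Tq_eq, map_sub]
  refine ⟨?_, ?_, ?_, ?_⟩
  · rw [Tq_comm BC BC_symm va, Sq_antisymm BC BC_symm vabar vabarstar,
      Sq_antisymm BC BC_symm va vastar]
    simp [BC, va, vabar, vastar, vabarstar]
    try module
  · rw [Tq_comm BC BC_symm va vastar, Tq_comm BC BC_symm vabar vabarstar]
    simp [BC, va, vabar, vastar, vabarstar]
    try module
  · rw [Tq_comm BC BC_symm va vastar, Tq_comm BC BC_symm vabar vabarstar,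
      Sq_antisymm BC BC_symm vabar vastar]
    simp [BC, va, vabar, vastar, vabarstar]
    try module
  · rw [Tq_comm BC BC_symm va vastar va vastar, Tq_comm BC BC_symm vabar vabarstar va vastar,
      Tq_comm BC BC_symm va vastar vabar vabarstar,
      Tq_comm BC BC_symm vabar vabarstar vabar vabarstar]
    simp [BC, va, vabar, vastar, vabarstar]
    try split_ifs <;> module
end
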